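/- Let α = [0; a₁, a₂, …] ∈ (0,1) be irrational with (aₙ) bounded and let (qₙ) be the denominators of the convergents of α. Then t^s_{(qₙ)}(𝕋) is an uncountable subgroup of 𝕋 containing the cyclic subgroup ⟨α⟩ generated by (the class of) α, and in particular t^s_{(qₙ)}(𝕋) ≠ t_{(qₙ)}(𝕋). -/

import Mathlib

open Filter Topology

noncomputable section

/-- The circle group `𝕋 = ℝ/ℤ`. -/
abbrev Circle1 : Type := AddCircle (1 : ℝ)

/-- A set of naturals has natural density zero. -/
def DensityZero (A : Set ℕ) : Prop :=
  Tendsto (fun n : ℕ => ((A ∩ Set.Icc 1 n).ncard : ℝ) / n) atTop (𝓝 0)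

/-- Statistical convergence to `0` of a sequence in the circle. -/
def StatTendstoZero (x : ℕ → Circle1) : Prop :=
  ∀ ε : ℝ, 0 < ε → DensityZero {n : ℕ | ε ≤ ‖x n‖}

/-- The characterized subgroup `t_(a_n)(𝕋)`. -/
def charSet (a : ℕ → ℤ) : Set Circle1 :=
  {x : Circle1 | Tendsto (fun n : ℕ => a n • x) atTop (𝓝 0)}

/-- The statistically characterized subgroup `t^s_(a_n)(𝕋)`. -/
def statCharSet (a : ℕ → ℤ) : Set Circle1 :=
  {x : Circle1 | StatTendstoZero (fun n : ℕ => a n • x)}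

namespace CF

/-- Gauss-map orbit of `α`: `G α 0 = α`, `G α (n+1) = {1 / G α n}`. -/
def G (α : ℝ) : ℕ → ℝ
  | 0 => α
  | n + 1 => Int.fract (G α n)⁻¹

/-- The partial quotients of the regular continued fraction `α = [0; a 1, a 2, …]`
(with the convention `a 0 = 0`). -/
def a (α : ℝ) : ℕ → ℕ
  | 0 => 0
  | n + 1 => ⌊(G α n)⁻¹⌋₊

/-- Denominators of the convergents of the continued fraction of `α`. -/
def q (α : ℝ) : ℕ → ℕ
  | 0 => 1
  | 1 => a α 1
  | (n + 2) => a α (n + 2) * q α (n + 1) + q α n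

/-- Numerators of the convergents of the continued fraction of `α`. -/
def p (α : ℝ) : ℕ → ℕ
  | 0 => 0
  | 1 => 1
  | (n + 2) => a α (n + 2) * p α (n + 1) + p α n

/-- `θ n = q n * α - p n`. -/
def θ (α : ℝ) (n : ℕ) : ℝ := (q α n : ℝ) * α - (p α n : ℝ)

end CF

open CF

/-!
If `q n * |θ n| ≤ 1 / 2`, choose `c` with `c * q n * |θ n| ∈ [1 / 4, 1 / 2]` and put
`y = c * q n * α` in the circle. Then `‖q n * y‖ ≥ 1 / 4`, whereas `‖q m * y‖` decays geometrically
in `|m - n|`: for `m < n` because `q` at least doubles every two steps, for `m > n` because `|θ|` at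
least halves every two steps (here one exchanges the roles of `m` and `n` in `q m * q n * α`).

By Vahlen's theorem one of any two consecutive indices is admissible, so one may choose admissible
indices `ν 0, ν 1, …` whose gaps tend to infinity, with corresponding elements `y 0, y 1, …`. For
`T ⊆ ℕ` and `x_T = ∑ k ∈ T, y k`, the norm `‖q m * x_T‖` is small unless `m` is within bounded
distance of some `ν k`, which happens only on a set of density zero; so `x_T` lies in the
statistically characterized subgroup. But `x_A - x_B` leaves the characterized subgroup as soon as
`A \ B` is infinite, since `‖q (ν k) * (x_A - x_B)‖` is close to `‖q (ν k) * y k‖ ≥ 1 / 4` for large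
`k ∈ A \ B`. As `ℕ` has uncountably many subsets with pairwise infinite differences, both claims
follow.
-/

/-! ### Sets of density zero -/

lemma DensityZero.mono {A B : Set ℕ} (hB : DensityZero B) (h : A ⊆ B) : DensityZero A := by
  refine squeeze_zero (fun n => by positivity) (fun n => ?_) hB
  have := Set.ncard_le_ncard (Set.inter_subset_inter_left (Set.Icc 1 n) h)
    ((Set.finite_Icc 1 n).inter_of_right B)
  gcongr

lemma densityZero_of_finite {A : Set ℕ} (hA : A.Finite) : DensityZero A := by
  refine squeeze_zero (fun n => by positivity) (fun n => ?_)
    (tendsto_const_div_atTop_nhds_zero_nat (A.ncard : ℝ))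
  have := Set.ncard_le_ncard (Set.inter_subset_left : A ∩ Set.Icc 1 n ⊆ A) hA
  gcongr

lemma DensityZero.union {A B : Set ℕ} (hA : DensityZero A) (hB : DensityZero B) :
    DensityZero (A ∪ B) := by
  refine squeeze_zero (fun n => by positivity) (fun n => ?_) (by simpa using hA.add hB)
  rw [Set.union_inter_distrib_right, ← add_div]
  have := Set.ncard_union_le (A ∩ Set.Icc 1 n) (B ∩ Set.Icc 1 n)
  gcongr
  exact_mod_cast this

lemma densityZero_biUnion {ι : Type*} (s : Finset ι) {A : ι → Set ℕ}
    (hA : ∀ i ∈ s, DensityZero (A i)) : DensityZero (⋃ i ∈ s, A i) := by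
  classical
  induction s using Finset.induction_on with
  | empty => simpa using densityZero_of_finite Set.finite_empty
  | insert i s _ ih =>
    rw [Finset.set_biUnion_insert]
    exact (hA i (Finset.mem_insert_self i s)).union
      (ih fun j hj => hA j (Finset.mem_insert_of_mem hj))

lemma densityZero_of_forall_mul_ncard_le {A : Set ℕ}
    (h : ∀ M : ℕ, ∃ C : ℕ, ∀ n : ℕ, M * (A ∩ Set.Icc 1 n).ncard ≤ n + C) : DensityZero A := by
  refine tendsto_order.2 ⟨fun b hb => Eventually.of_forall fun n => hb.trans_le (by positivity),
    fun ε hε => ?_⟩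
  obtain ⟨M, hM⟩ := exists_nat_gt (2 / ε)
  obtain ⟨C, hC⟩ := h M
  filter_upwards [eventually_ge_atTop (C + 1)] with n hn
  have hn0 : (0 : ℝ) < n := by exact_mod_cast C.succ_pos.trans_le hn
  have hcount : (M : ℝ) * (A ∩ Set.Icc 1 n).ncard ≤ 2 * n := by
    exact_mod_cast (hC n).trans (by omega)
  rw [div_lt_iff₀ hε] at hM
  rw [div_lt_iff₀ hn0]
  have hMpos : (0 : ℝ) < M := by
    by_contra! hM0
    nlinarith
  refine lt_of_mul_lt_mul_left (hcount.trans_lt ?_) hMpos.le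
  nlinarith

lemma ncard_le_of_pairwise_le_abs_sub {S : Set ℕ} {M N : ℕ} (hM : 0 < M) (hN : S ⊆ Set.Iic N)
    (hsep : S.Pairwise fun m n => (M : ℤ) ≤ |(m : ℤ) - n|) : S.ncard ≤ N / M + 1 := by
  rw [← Set.ncard_Iio_nat (N / M + 1)]
  refine Set.ncard_le_ncard_of_injOn (· / M)
    (fun n hn => Nat.lt_succ_of_le (Nat.div_le_div_right (hN hn))) fun m hm n hn hmn => ?_
  by_contra hne
  have hgap : (M : ℤ) ≤ |(m : ℤ) - n| := hsep hm hn hne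
  have hm' := Nat.div_add_mod m M
  have hn' := Nat.div_add_mod n M
  have := Nat.mod_lt m hM
  have := Nat.mod_lt n hM
  dsimp only at hmn
  rw [hmn] at hm'
  rw [le_abs] at hgap
  omega

/-- The distance from `ν k` to every other term exceeds `k`. In particular the terms are distinct,
and the gaps between them tend to infinity. -/
def WidelySpaced (ν : ℕ → ℕ) : Prop :=
  ∀ j k : ℕ, j ≠ k → (k : ℤ) < |(ν j : ℤ) - ν k|

namespace WidelySpaced

variable {ν : ℕ → ℕ}

lemma injective (hν : WidelySpaced ν) : Function.Injective ν := by
  intro j k hjk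
  by_contra hne
  have := hν j k hne
  rw [hjk, sub_self, abs_zero] at this
  omega

lemma eventually_sub_notMem (hν : WidelySpaced ν) (s : Finset ℤ) :
    ∀ᶠ k in atTop, ∀ j ≠ k, (ν j : ℤ) - ν k ∉ s := by
  filter_upwards [eventually_ge_atTop (s.sup Int.natAbs)] with k hk j hjk hmem
  have hle : ((ν j : ℤ) - ν k).natAbs ≤ s.sup Int.natAbs := Finset.le_sup hmem
  have := hν j k hjk
  rw [lt_abs] at this
  omega

lemma densityZero_setOf_sub_eq (hν : WidelySpaced ν) (t : ℤ) :
    DensityZero {n : ℕ | ∃ k, (ν k : ℤ) - n = t} := by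
  refine densityZero_of_forall_mul_ncard_le fun M => ⟨M * M + M, fun N => ?_⟩
  rcases M.eq_zero_or_pos with rfl | hM
  · simp
  set early : Set ℕ := (fun k => ((ν k : ℤ) - t).toNat) '' Set.Iio M
  set late : Set ℕ := {n | ∃ k, M ≤ k ∧ (ν k : ℤ) - n = t} ∩ Set.Icc 1 N
  have hsplit : {n : ℕ | ∃ k, (ν k : ℤ) - n = t} ∩ Set.Icc 1 N ⊆ early ∪ late := by
    rintro n ⟨⟨k, hk⟩, hn⟩
    rcases lt_or_ge k M with hkM | hkM
    · exact .inl ⟨k, hkM, by dsimp only; omega⟩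
    · exact .inr ⟨⟨k, hkM, hk⟩, hn⟩
  have hearly : early.ncard ≤ M := by
    simpa using Set.ncard_image_le (f := fun k => ((ν k : ℤ) - t).toNat) (Set.finite_Iio M)
  have hlate : late.ncard ≤ N / M + 1 := by
    refine ncard_le_of_pairwise_le_abs_sub hM (fun n hn => hn.2.2) ?_
    rintro m ⟨⟨j, -, hm⟩, -⟩ n ⟨⟨k, hk, hn⟩, -⟩ hmn
    rw [show (m : ℤ) - n = ν j - ν k by linarith]
    exact (Int.ofNat_le.2 hk).trans (hν j k (by rintro rfl; omega)).le
  have hfinite : (early ∪ late).Finite :=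
    (Set.toFinite early).union ((Set.finite_Icc 1 N).inter_of_right _)
  have hcard := (Set.ncard_le_ncard hsplit hfinite).trans (Set.ncard_union_le early late)
  have := Nat.mul_div_le N M
  nlinarith

end WidelySpaced

lemma widelySpaced_of_near_sq {ν : ℕ → ℕ} (hlow : ∀ k, (k + 1) ^ 2 ≤ ν k)
    (hhigh : ∀ k, ν k ≤ (k + 1) ^ 2 + 1) : WidelySpaced ν := by
  intro j k hjk
  zify at hlow hhigh
  rw [lt_abs]
  rcases lt_or_gt_of_ne hjk with h | h
  · right; nlinarith [hlow k, hhigh j]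
  · left; nlinarith [hlow j, hhigh k]

/-! ### Characterized and statistically characterized subgroups -/

/-- The set `charSet b` as a subgroup of the circle. -/
def charSubgroup (b : ℕ → ℤ) : AddSubgroup Circle1 where
  carrier := charSet b
  zero_mem' := by
    change Tendsto (fun n => b n • (0 : Circle1)) atTop (𝓝 0)
    simpa only [smul_zero] using tendsto_const_nhds
  add_mem' {x y} hx hy := by
    change Tendsto (fun n => b n • (x + y)) atTop (𝓝 0)
    simpa only [smul_add, add_zero] using Tendsto.add hx hy
  neg_mem' {x} hx := by
    change Tendsto (fun n => b n • -x) atTop (𝓝 0)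
    simpa only [smul_neg, neg_zero] using Tendsto.neg hx

lemma mem_charSubgroup {b : ℕ → ℤ} {x : Circle1} :
    x ∈ charSubgroup b ↔ Tendsto (fun n => b n • x) atTop (𝓝 0) := Iff.rfl

lemma charSet_subset_statCharSet (b : ℕ → ℤ) : charSet b ⊆ statCharSet b := by
  intro x hx ε hε
  obtain ⟨N, hN⟩ := eventually_atTop.1 <|
    (tendsto_zero_iff_norm_tendsto_zero.1 hx).eventually_lt_const hε
  refine densityZero_of_finite ((Set.finite_Iio N).subset fun n hn => ?_)
  by_contra hNn
  exact (hN n (not_lt.1 hNn)).not_ge hn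

/-- The sum of the subseries `∑ k ∈ T, y k`. -/
def subseriesSum (y : ℕ → Circle1) (T : Set ℕ) : Circle1 := ∑' k, T.indicator y k

lemma exists_setMap_infinite_diff :
    ∃ f : Set ℕ → Set ℕ, ∀ A B, ¬ A ⊆ B → (f A \ f B).Infinite := by
  refine ⟨fun A => {k | (Nat.unpair k).1 ∈ A}, fun A B hAB => ?_⟩
  obtain ⟨i, hiA, hiB⟩ := Set.not_subset.1 hAB
  refine Set.infinite_of_injective_forall_mem (f := Nat.pair i)
    (fun j k hjk => (Nat.pair_eq_pair.1 hjk).2) fun j => ?_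
  simpa [Nat.unpair_pair] using And.intro hiA hiB

lemma not_countable_of_injective_set {β : Type*} {S : Set β} {f : Set ℕ → β}
    (hf : Function.Injective f) (hfS : ∀ A, f A ∈ S) : ¬ S.Countable := by
  intro hS
  have : Countable S := hS
  obtain ⟨g, hg⟩ := exists_injective_nat S
  exact Function.cantor_injective (fun A => g ⟨f A, hfS A⟩) fun A B hAB =>
    hf (congrArg Subtype.val (hg hAB))

section Concentrated

variable {b : ℕ → ℤ} {y : ℕ → Circle1} {ν : ℕ → ℕ} {F : ℤ → ℝ} {δ : ℝ}

lemma exists_finset_norm_smul_subseriesSum_le (hν : Function.Injective ν) (hy : Summable y)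
    (hF : Summable F) (hbound : ∀ n k, ‖b n • y k‖ ≤ F ((ν k : ℤ) - n)) {ε : ℝ} (hε : 0 < ε) :
    ∃ s : Finset ℤ, ∀ (n : ℕ) (T : Set ℕ), (∀ k ∈ T, (ν k : ℤ) - n ∉ s) →
      ‖b n • subseriesSum y T‖ ≤ ε := by
  classical
  obtain ⟨s, hs⟩ := summable_iff_vanishing_norm.1 hF ε hε
  refine ⟨s, fun n T hT => ?_⟩
  have hinj : Function.Injective fun k => (ν k : ℤ) - n := fun j k hjk =>
    hν (by simpa using hjk)
  refine le_of_tendsto (((hy.indicator T).hasSum.const_smul (b n)).norm)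
    (Eventually.of_forall fun U => ?_)
  calc ‖∑ k ∈ U, b n • T.indicator y k‖
      = ‖∑ k ∈ U with k ∈ T, b n • y k‖ := by
        simp only [Finset.sum_filter, Set.indicator_apply, smul_ite, smul_zero]
    _ ≤ ∑ k ∈ U with k ∈ T, F ((ν k : ℤ) - n) := norm_sum_le_of_le _ fun k _ => hbound n k
    _ = ∑ z ∈ ({k ∈ U | k ∈ T}).image fun k => (ν k : ℤ) - n, F z :=
        (Finset.sum_image hinj.injOn).symm
    _ ≤ ‖∑ z ∈ ({k ∈ U | k ∈ T}).image fun k => (ν k : ℤ) - n, F z‖ := Real.le_norm_self _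
    _ ≤ ε := (hs _ (Finset.disjoint_left.2 fun z hz => by
        obtain ⟨k, hk, rfl⟩ := Finset.mem_image.1 hz
        exact hT k (Finset.mem_filter.1 hk).2)).le

lemma subseriesSum_mem_statCharSet (hν : WidelySpaced ν) (hy : Summable y)
    (hF : Summable F) (hbound : ∀ n k, ‖b n • y k‖ ≤ F ((ν k : ℤ) - n)) (T : Set ℕ) :
    subseriesSum y T ∈ statCharSet b := by
  intro ε hε
  obtain ⟨s, hs⟩ :=
    exists_finset_norm_smul_subseriesSum_le hν.injective hy hF hbound (half_pos hε)
  refine (densityZero_biUnion s fun t _ => hν.densityZero_setOf_sub_eq t).mono fun n hn => ?_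
  by_contra hfar
  simp only [Set.mem_iUnion, Set.mem_ofPred_eq, not_exists] at hfar
  have hsmall := hs n T fun k _ hk => hfar _ hk k rfl
  have hlarge : ε ≤ ‖b n • subseriesSum y T‖ := hn
  linarith

lemma subseriesSum_eq_add_diff_singleton (hy : Summable y) {T : Set ℕ} {k : ℕ} (hk : k ∈ T) :
    subseriesSum y T = y k + subseriesSum y (T \ {k}) := by
  classical
  rw [subseriesSum, (hy.indicator T).tsum_eq_add_tsum_ite k, Set.indicator_of_mem hk]
  congr 1
  refine tsum_congr fun j => ?_
  by_cases hjk : j = k <;> simp [hjk, Set.indicator_apply]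

lemma finite_diff_of_subseriesSum_sub_mem (hν : WidelySpaced ν) (hy : Summable y)
    (hF : Summable F) (hbound : ∀ n k, ‖b n • y k‖ ≤ F ((ν k : ℤ) - n))
    (hδ : 0 < δ) (hlarge : ∀ k, δ ≤ ‖b (ν k) • y k‖) {A B : Set ℕ}
    (hAB : subseriesSum y A - subseriesSum y B ∈ charSubgroup b) : (A \ B).Finite := by
  obtain ⟨s, hs⟩ := exists_finset_norm_smul_subseriesSum_le hν.injective hy hF hbound
    (show 0 < δ / 4 by positivity)
  have hsmall := hν.injective.nat_tendsto_atTop.eventually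
    ((tendsto_zero_iff_norm_tendsto_zero.1 (mem_charSubgroup.1 hAB)).eventually_lt_const
      (show 0 < δ / 4 by positivity))
  suffices h : ∀ᶠ k in cofinite, k ∉ A \ B by
    simpa only [eventually_cofinite, not_not, Set.ofPred_mem_eq] using h
  rw [Nat.cofinite_eq_atTop]
  filter_upwards [hsmall, hν.eventually_sub_notMem s] with k hk hfar ⟨hkA, hkB⟩
  have hA := hs (ν k) (A \ {k}) fun j hj => hfar j hj.2
  have hB := hs (ν k) B fun j hj => hfar j (ne_of_mem_of_not_mem hj hkB)
  have hdecomp : b (ν k) • y k = b (ν k) • (subseriesSum y A - subseriesSum y B)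
      - b (ν k) • subseriesSum y (A \ {k}) + b (ν k) • subseriesSum y B := by
    rw [subseriesSum_eq_add_diff_singleton hy hkA, ← smul_sub, ← smul_add]
    congr 1
    abel
  have htri := norm_add_le_of_le (norm_sub_le_of_le hk.le hA) hB
  rw [← hdecomp] at htri
  linarith [hlarge k]

theorem statCharSet_not_countable_and_ne_charSet (hν : WidelySpaced ν) (hy : Summable y)
    (hF : Summable F) (hbound : ∀ n k, ‖b n • y k‖ ≤ F ((ν k : ℤ) - n))
    (hδ : 0 < δ) (hlarge : ∀ k, δ ≤ ‖b (ν k) • y k‖) :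
    ¬ (statCharSet b).Countable ∧ statCharSet b ≠ charSet b := by
  obtain ⟨f, hf⟩ := exists_setMap_infinite_diff
  have hmem : ∀ A, subseriesSum y (f A) ∈ statCharSet b := fun A =>
    subseriesSum_mem_statCharSet hν hy hF hbound (f A)
  have hsub : ∀ {A B}, subseriesSum y (f A) - subseriesSum y (f B) ∈ charSubgroup b → A ⊆ B :=
    fun {A B} hAB => by_contra fun hnot => hf A B hnot
      (finite_diff_of_subseriesSum_sub_mem hν hy hF hbound hδ hlarge hAB)
  constructor
  · refine not_countable_of_injective_set (fun A B hAB => ?_) hmem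
    have hAB' : subseriesSum y (f A) = subseriesSum y (f B) := hAB
    exact (hsub (by rw [hAB', sub_self]; exact zero_mem _)).antisymm
      (hsub (by rw [hAB', sub_self]; exact zero_mem _))
  · intro heq
    have hchar : ∀ A, subseriesSum y (f A) ∈ charSubgroup b := fun A => heq.subset (hmem A)
    exact (hsub (sub_mem (hchar Set.univ) (hchar ∅))).not_gt (by simp)

end Concentrated

/-! ### Continued fractions -/

lemma le_geometric_of_two_mul_le {f : ℕ → ℝ} (hf : Antitone f) (hpos : ∀ n, 0 ≤ f n)
    (hhalf : ∀ n, 2 * f (n + 2) ≤ f n) (n d : ℕ) : f (n + d) ≤ 2 * (3 / 4) ^ d * f n := by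
  induction d using Nat.twoStepInduction with
  | zero => norm_num; linarith [hpos n]
  | one => norm_num; linarith [hpos n, hf n.le_succ]
  | more d ih _ =>
    calc f (n + (d + 2)) ≤ 1 / 2 * f (n + d) := by
          linarith [show 2 * f (n + (d + 2)) ≤ f (n + d) from hhalf (n + d)]
      _ ≤ (3 / 4) ^ 2 * (2 * (3 / 4) ^ d * f n) :=
        mul_le_mul (by norm_num) ih (hpos _) (by norm_num)
      _ = 2 * (3 / 4) ^ (d + 2) * f n := by ring

lemma exists_nat_mul_mem_Icc {u : ℝ} (hu : 0 < u) (hu2 : u ≤ 1 / 2) :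
    ∃ c : ℕ, c * u ∈ Set.Icc (1 / 4 : ℝ) (1 / 2) := by
  have hle : 1 ≤ 1 / 2 / u := (one_le_div hu).2 hu2
  have hfloor : (1 : ℝ) ≤ ⌊1 / 2 / u⌋₊ := by exact_mod_cast Nat.le_floor (by simpa using hle)
  have hlow := Nat.lt_floor_add_one (1 / 2 / u)
  have hhigh := Nat.floor_le (zero_le_one.trans hle)
  rw [div_lt_iff₀ hu] at hlow
  rw [le_div_iff₀ hu] at hhigh
  exact ⟨⌊1 / 2 / u⌋₊, by nlinarith, hhigh⟩

lemma summable_pow_natAbs {r : ℝ} (h0 : 0 ≤ r) (h1 : r < 1) :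
    Summable fun z : ℤ => r ^ z.natAbs :=
  .of_nat_of_neg (by simpa using summable_geometric_of_lt_one h0 h1)
    (by simpa using summable_geometric_of_lt_one h0 h1)

namespace CF

variable {α : ℝ}

lemma q_nsmul_coe (n : ℕ) : q α n • (α : Circle1) = (θ α n : Circle1) := by
  have hp : ((p α n : ℝ) : Circle1) = 0 := by
    simpa using (AddCircle.coe_eq_zero_iff (1 : ℝ)).2 ⟨(p α n : ℤ), by simp⟩
  rw [θ, AddCircle.coe_sub, hp, sub_zero, ← nsmul_eq_mul, AddCircle.coe_nsmul]

lemma norm_q_nsmul_q_nsmul_le (m n : ℕ) :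
    ‖q α m • q α n • (α : Circle1)‖ ≤ q α m * |θ α n| := by
  rw [q_nsmul_coe, ← Real.norm_eq_abs]
  exact norm_nsmul_le.trans (by gcongr; exact QuotientAddGroup.norm_mk_le_norm)

lemma abs_θ_pos (hirr : Irrational α) {n : ℕ} (hq : 0 < q α n) : 0 < |θ α n| :=
  abs_pos.2 ((hirr.natCast_mul hq.ne').sub_natCast (p α n)).ne_zero

variable (hα : α ∈ Set.Ioo (0 : ℝ) 1) (hirr : Irrational α)

include hirr in
lemma irrational_G (n : ℕ) : Irrational (G α n) := by
  induction n with
  | zero => exact hirr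
  | succ n ih =>
    have h := ih.inv.sub_intCast ⌊(G α n)⁻¹⌋
    rwa [Int.self_sub_floor] at h

include hα hirr

lemma G_mem_Ioo (n : ℕ) : G α n ∈ Set.Ioo (0 : ℝ) 1 := by
  cases n with
  | zero => exact hα
  | succ n =>
    exact ⟨(Int.fract_nonneg _).lt_of_ne (irrational_G hirr (n + 1)).ne_zero.symm,
      Int.fract_lt_one _⟩

lemma G_mul_a_add_G (n : ℕ) : G α n * (a α (n + 1) + G α (n + 1)) = 1 := by
  have hG := (G_mem_Ioo hα hirr n).1
  have hinv : (a α (n + 1) + G α (n + 1) : ℝ) = (G α n)⁻¹ := by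
    rw [a, G, natCast_floor_eq_intCast_floor (inv_nonneg.2 hG.le), Int.floor_add_fract]
  rw [hinv, mul_inv_cancel₀ hG.ne']

lemma one_le_a_succ (n : ℕ) : 1 ≤ a α (n + 1) := by
  have h := G_mem_Ioo hα hirr n
  exact Nat.le_floor (by simpa using (one_le_inv₀ h.1).2 h.2.le)

lemma q_monotone : Monotone (q α) := by
  refine monotone_nat_of_le_succ fun n => ?_
  cases n with
  | zero => exact one_le_a_succ hα hirr 0
  | succ n =>
    exact (Nat.le_mul_of_pos_left _ (one_le_a_succ hα hirr (n + 1))).trans (Nat.le_add_right _ _)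

lemma q_pos (n : ℕ) : 0 < q α n :=
  Nat.one_pos.trans_le (q_monotone hα hirr n.zero_le)

lemma two_mul_q_le (n : ℕ) : 2 * q α n ≤ q α (n + 2) := by
  calc 2 * q α n = 1 * q α n + q α n := by ring
    _ ≤ a α (n + 2) * q α (n + 1) + q α n := by
      gcongr
      · exact one_le_a_succ hα hirr (n + 1)
      · exact q_monotone hα hirr n.le_succ

lemma q_le_geometric (n d : ℕ) : (q α n : ℝ) ≤ 2 * (3 / 4) ^ d * q α (n + d) := by
  have hpos : ∀ n, (0 : ℝ) < q α n := fun n => by exact_mod_cast q_pos hα hirr n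
  have h := le_geometric_of_two_mul_le (f := fun n => (q α n : ℝ)⁻¹)
    (fun m n hmn => inv_anti₀ (hpos m) (by exact_mod_cast q_monotone hα hirr hmn))
    (fun n => (inv_pos.2 (hpos n)).le) (fun n => ?_) n d
  · rwa [← div_eq_mul_inv, le_div_iff₀ (hpos n), inv_mul_le_iff₀ (hpos _), mul_comm] at h
  · have : (2 : ℝ) * q α n ≤ q α (n + 2) := by exact_mod_cast two_mul_q_le hα hirr n
    rwa [← div_eq_mul_inv, div_le_iff₀ (hpos _), inv_mul_eq_div, le_div_iff₀ (hpos n)]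

lemma θ_succ (n : ℕ) : θ α (n + 1) = -G α (n + 1) * θ α n := by
  induction n with
  | zero =>
    have h := G_mul_a_add_G hα hirr 0
    simp only [θ, q, p, G] at h ⊢
    push_cast
    linarith
  | succ n ih =>
    have h := G_mul_a_add_G hα hirr (n + 1)
    have hrec : θ α (n + 2) = a α (n + 2) * θ α (n + 1) + θ α n := by
      simp only [θ, q, p]
      push_cast
      ring
    rw [hrec, ih]
    linear_combination (-θ α n) * h

lemma abs_θ_succ (n : ℕ) : |θ α (n + 1)| = G α (n + 1) * |θ α n| := by
  rw [θ_succ hα hirr, abs_mul, abs_neg, abs_of_pos (G_mem_Ioo hα hirr (n + 1)).1]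

lemma two_mul_abs_θ_le (n : ℕ) : 2 * |θ α (n + 2)| ≤ |θ α n| := by
  have hG := G_mem_Ioo hα hirr (n + 1)
  have hG' := G_mem_Ioo hα hirr (n + 2)
  have ha : (1 : ℝ) ≤ a α (n + 2) := by exact_mod_cast one_le_a_succ hα hirr (n + 1)
  have hprod : 2 * (G α (n + 2) * G α (n + 1)) ≤ 1 := by
    nlinarith [G_mul_a_add_G hα hirr (n + 1), hG.1, hG'.2]
  rw [abs_θ_succ hα hirr, abs_θ_succ hα hirr]
  nlinarith [abs_nonneg (θ α n)]

lemma abs_θ_le_geometric (n d : ℕ) : |θ α (n + d)| ≤ 2 * (3 / 4) ^ d * |θ α n| := by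
  refine le_geometric_of_two_mul_le (f := fun n => |θ α n|)
    (antitone_nat_of_succ_le fun n => ?_) (fun n => abs_nonneg _) (two_mul_abs_θ_le hα hirr) n d
  rw [abs_θ_succ hα hirr]
  exact mul_le_of_le_one_left (abs_nonneg _) (G_mem_Ioo hα hirr (n + 1)).2.le

lemma q_succ_mul_abs_θ_add_q_mul_abs_θ_succ (n : ℕ) :
    q α (n + 1) * |θ α n| + q α n * |θ α (n + 1)| = 1 := by
  induction n with
  | zero =>
    have h := G_mul_a_add_G hα hirr 0
    have hθ : θ α 0 = α := by simp [θ, q, p]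
    rw [abs_θ_succ hα hirr, hθ, abs_of_pos hα.1]
    simp only [q, G] at h ⊢
    push_cast
    linarith
  | succ n ih =>
    have h := G_mul_a_add_G hα hirr (n + 1)
    rw [abs_θ_succ hα hirr n] at ih
    rw [abs_θ_succ hα hirr (n + 1), abs_θ_succ hα hirr n]
    simp only [q]
    push_cast
    linear_combination ih + (q α (n + 1) : ℝ) * |θ α n| * h

/- Vahlen's theorem: by the previous identity the product of the two quantities has the form
`s * (1 - s) ≤ 1 / 4`. -/
lemma q_mul_abs_θ_le_half_or_succ (n : ℕ) :
    q α n * |θ α n| ≤ 1 / 2 ∨ q α (n + 1) * |θ α (n + 1)| ≤ 1 / 2 := by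
  by_contra! ⟨hn, hn'⟩
  have hsum := q_succ_mul_abs_θ_add_q_mul_abs_θ_succ hα hirr n
  have hlt : 1 / 4 < (q α n * |θ α n|) * (q α (n + 1) * |θ α (n + 1)|) := by nlinarith
  refine hlt.not_ge ?_
  calc (q α n * |θ α n|) * (q α (n + 1) * |θ α (n + 1)|)
      = (q α (n + 1) * |θ α n|) * (q α n * |θ α (n + 1)|) := by ring
    _ ≤ ((q α (n + 1) * |θ α n| + q α n * |θ α (n + 1)|) / 2) ^ 2 := by
      linarith [sq_nonneg (q α (n + 1) * |θ α n| - q α n * |θ α (n + 1)|)]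
    _ = 1 / 4 := by rw [hsum]; norm_num

lemma exists_widelySpaced_q_mul_abs_θ_le_half :
    ∃ ν : ℕ → ℕ, WidelySpaced ν ∧ ∀ k, q α (ν k) * |θ α (ν k)| ≤ 1 / 2 := by
  have hex : ∀ k : ℕ, ∃ n, (k + 1) ^ 2 ≤ n ∧ n ≤ (k + 1) ^ 2 + 1 ∧ q α n * |θ α n| ≤ 1 / 2 := by
    intro k
    rcases q_mul_abs_θ_le_half_or_succ hα hirr ((k + 1) ^ 2) with h | h
    · exact ⟨_, le_rfl, Nat.le_succ _, h⟩
    · exact ⟨_, Nat.le_succ _, le_rfl, h⟩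
  choose ν hlow hhigh hν using hex
  exact ⟨ν, widelySpaced_of_near_sq hlow hhigh, hν⟩

lemma norm_q_nsmul_q_nsmul_le_geometric (m n : ℕ) :
    ‖q α n • q α m • (α : Circle1)‖ ≤
      2 * (3 / 4) ^ ((m : ℤ) - n).natAbs * (q α m * |θ α m|) := by
  rcases le_total n m with hnm | hmn
  · obtain ⟨d, rfl⟩ := Nat.exists_eq_add_of_le hnm
    rw [show ((n + d : ℕ) - n : ℤ).natAbs = d by omega]
    calc _ ≤ q α n * |θ α (n + d)| := norm_q_nsmul_q_nsmul_le n (n + d)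
      _ ≤ 2 * (3 / 4) ^ d * q α (n + d) * |θ α (n + d)| := by
        gcongr
        exact q_le_geometric hα hirr n d
      _ = _ := by ring
  · obtain ⟨d, rfl⟩ := Nat.exists_eq_add_of_le hmn
    rw [show (m - (m + d : ℕ) : ℤ).natAbs = d by omega, smul_comm]
    calc _ ≤ q α m * |θ α (m + d)| := norm_q_nsmul_q_nsmul_le m (m + d)
      _ ≤ q α m * (2 * (3 / 4) ^ d * |θ α m|) := by
        gcongr
        exact abs_θ_le_geometric hα hirr m d
      _ = _ := by ring

lemma norm_q_nsmul_mul_q_nsmul_le {c m : ℕ} (hc : c * (q α m * |θ α m|) ≤ 1 / 2) (n : ℕ) :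
    ‖q α n • (c * q α m) • (α : Circle1)‖ ≤ (3 / 4) ^ ((m : ℤ) - n).natAbs := by
  rw [mul_smul, smul_comm]
  calc _ ≤ c * ‖q α n • q α m • (α : Circle1)‖ := norm_nsmul_le
    _ ≤ c * (2 * (3 / 4) ^ ((m : ℤ) - n).natAbs * (q α m * |θ α m|)) := by
      gcongr
      exact norm_q_nsmul_q_nsmul_le_geometric hα hirr m n
    _ = 2 * (3 / 4) ^ ((m : ℤ) - n).natAbs * (c * (q α m * |θ α m|)) := by ring
    _ ≤ 2 * (3 / 4) ^ ((m : ℤ) - n).natAbs * (1 / 2) := by gcongr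
    _ = (3 / 4) ^ ((m : ℤ) - n).natAbs := by ring

omit hα hirr in
lemma norm_q_nsmul_mul_q_nsmul_self {c m : ℕ} (hc : c * (q α m * |θ α m|) ≤ 1 / 2) :
    ‖q α m • (c * q α m) • (α : Circle1)‖ = c * (q α m * |θ α m|) := by
  have habs : |(q α m * c : ℕ) • θ α m| = c * (q α m * |θ α m|) := by
    rw [nsmul_eq_mul, abs_mul, Nat.abs_cast]
    push_cast
    ring
  rw [mul_smul, q_nsmul_coe, ← mul_smul, ← AddCircle.coe_nsmul,
    (AddCircle.norm_coe_eq_abs_iff 1 one_ne_zero).2 (by rwa [habs, abs_one]), habs]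

lemma coe_mem_charSubgroup : (α : Circle1) ∈ charSubgroup fun n => (q α n : ℤ) := by
  rw [mem_charSubgroup]
  simp only [natCast_zsmul, q_nsmul_coe]
  have hlim : Tendsto (fun n : ℕ => 2 * (3 / 4 : ℝ) ^ n * |θ α 0|) atTop (𝓝 0) := by
    simpa using ((tendsto_pow_atTop_nhds_zero_of_lt_one (r := (3 / 4 : ℝ)) (by norm_num)
      (by norm_num)).const_mul 2).mul_const |θ α 0|
  refine squeeze_zero_norm (fun n => ?_) hlim
  refine QuotientAddGroup.norm_mk_le_norm.trans ?_
  simpa using abs_θ_le_geometric hα hirr 0 n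

end CF

theorem stmt_12_general (α : ℝ) (hα : α ∈ Set.Ioo (0 : ℝ) 1) (hirr : Irrational α) :
    ¬ (statCharSet (fun n => (q α n : ℤ))).Countable ∧
    (AddSubgroup.zmultiples ((α : Circle1)) : Set Circle1) ⊆
      statCharSet (fun n => (q α n : ℤ)) ∧
    statCharSet (fun n => (q α n : ℤ)) ≠ charSet (fun n => (q α n : ℤ)) := by
  obtain ⟨ν, hν, hhalf⟩ := exists_widelySpaced_q_mul_abs_θ_le_half hα hirr
  choose c hc using fun k => exists_nat_mul_mem_Icc
    (mul_pos (Nat.cast_pos.2 (q_pos hα hirr (ν k))) (abs_θ_pos hirr (q_pos hα hirr (ν k))))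
    (hhalf k)
  set y : ℕ → Circle1 := fun k => (c k * q α (ν k)) • (α : Circle1)
  have hF := summable_pow_natAbs (r := 3 / 4) (by norm_num) (by norm_num)
  have hbound : ∀ n k, ‖(q α n : ℤ) • y k‖ ≤ (3 / 4) ^ ((ν k : ℤ) - n).natAbs := fun n k => by
    rw [natCast_zsmul]
    exact norm_q_nsmul_mul_q_nsmul_le hα hirr (hc k).2 n
  have hlarge : ∀ k, 1 / 4 ≤ ‖(q α (ν k) : ℤ) • y k‖ := fun k => by
    rw [natCast_zsmul, norm_q_nsmul_mul_q_nsmul_self (hc k).2]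
    exact (hc k).1
  have hy : Summable y := .of_norm_bounded
    (hF.comp_injective (Nat.cast_injective.comp hν.injective)) fun k => by
      simpa [q] using hbound 0 k
  obtain ⟨hunc, hne⟩ :=
    statCharSet_not_countable_and_ne_charSet hν hy hF hbound (by norm_num) hlarge
  refine ⟨hunc, ?_, hne⟩
  exact Set.Subset.trans (AddSubgroup.zmultiples_le_of_mem (coe_mem_charSubgroup hα hirr))
    (charSet_subset_statCharSet _)

/-- **Remark 2 (after Theorem B).** For bounded partial quotients, `t^s_(qₙ)(𝕋)` is an
uncountable subgroup containing `⟨α⟩`, hence `t^s_(qₙ)(𝕋) ≠ t_(qₙ)(𝕋)`. -/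
theorem stmt_12 (α : ℝ) (hα : α ∈ Set.Ioo (0 : ℝ) 1) (hirr : Irrational α)
    (M : ℕ) (hbd : ∀ n, 1 ≤ n → a α n ≤ M) :
    ¬ (statCharSet (fun n => (q α n : ℤ))).Countable ∧
    (AddSubgroup.zmultiples ((α : Circle1)) : Set Circle1) ⊆
      statCharSet (fun n => (q α n : ℤ)) ∧
    statCharSet (fun n => (q α n : ℤ)) ≠ charSet (fun n => (q α n : ℤ)) :=
  stmt_12_general α hα hirr
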